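/- Let $\nu$ be a probability measure on $[0,\infty)$ with finite fourth moment, $\sigma^2 = \int x^2 d\nu$, and let $(\mu_n)$ satisfy $n^2/\mu_n \to 0$. Let $(S_n^{\mu_n})$ be the Kingman random walk of index $\mu_n$ with step law $\nu$, i.e. the Markov chain on $[0,\infty)$ with $S_0 = 0$ and transition kernel $P(S_{n+1} \in A \mid S_n = x) = (\delta_x *_{\mu_n} \nu)(A)$. Then $((S_n^{\mu_n})^2 - n\sigma^2)/\sqrt{n}$ converges in distribution to $N(0, m_4(\nu) - \sigma^4)$. -/

import Mathlib

open MeasureTheory Filter ProbabilityTheory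

/-- The Kingman–Bessel normalization constant `κ_μ = ∫_{-1}^1 (1-v²)^{μ-3/2} dv`. -/
noncomputable def kappa (μ : ℝ) : ℝ := ∫ v in Set.Icc (-1 : ℝ) 1, (1 - v ^ 2) ^ (μ - 3 / 2)

/-- The Kingman–Bessel convolution of two point measures `δ_r *_μ δ_s`:
`(δ_r *_μ δ_s)(f) = κ_μ⁻¹ ∫_{-1}^1 f(√(r²+s²+2rsv)) (1-v²)^{μ-3/2} dv`. -/
noncomputable def kingmanKernel (μ r s : ℝ) : Measure ℝ :=
  (ENNReal.ofReal (kappa μ))⁻¹ •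
    Measure.map (fun v => Real.sqrt (r ^ 2 + s ^ 2 + 2 * r * s * v))
      ((volume.restrict (Set.Icc (-1 : ℝ) 1)).withDensity
        fun v => ENNReal.ofReal ((1 - v ^ 2) ^ (μ - 3 / 2)))

/-- The Kingman–Bessel convolution of two measures on `[0,∞)`. -/
noncomputable def kingmanConv (μ : ℝ) (ν₁ ν₂ : Measure ℝ) : Measure ℝ :=
  ν₁.bind fun r => ν₂.bind fun s => kingmanKernel μ r s

/-- The degenerate convolution `•` with `(δ_r • δ_s)(f) = f(√(r²+s²))`. -/
noncomputable def bulletConv (ν₁ ν₂ : Measure ℝ) : Measure ℝ :=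
  Measure.map (fun p : ℝ × ℝ => Real.sqrt (p.1 ^ 2 + p.2 ^ 2)) (ν₁.prod ν₂)

/-- `n`-fold Kingman–Bessel convolution power `ν^{(n,*_μ)}`. -/
noncomputable def kingmanPow (μ : ℝ) (ν : Measure ℝ) : ℕ → Measure ℝ
  | 0 => Measure.dirac 0
  | n + 1 => kingmanConv μ ν (kingmanPow μ ν n)

/-- `n`-fold `•`-convolution power `ν^{(n,•)}`. -/
noncomputable def bulletPow (ν : Measure ℝ) : ℕ → Measure ℝ
  | 0 => Measure.dirac 0
  | n + 1 => bulletConv ν (bulletPow ν n)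

/-!
One step of the walk replaces `S²` by `R² + S² + 2RSV`, where `R` has law `ν` and the cosine `V` is
independent of `(R, S)` with mean `0` and variance `1 / (2μ)`. Conditionally on `(R, S)`, the cross
term multiplies `exp (iθ(R² + S²))` by the characteristic function of `V` at `2θRS`, which differs
from `1` by at most `θ²R²S² / μ` because the first order term vanishes. As `E[Sₙ²] = nσ²`, summing
these errors gives `‖E[exp (iθSₙ²)] - φ(θ)ⁿ‖ ≤ θ²σ⁴n² / μ`, where `φ` is the characteristic
function of `R²`. At `θ = t / √n` this is `t²σ⁴n / μₙ`, which tends to `0`, so `Sₙ²` inherits the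
classical central limit theorem for sums of i.i.d. copies of `R²`.
-/

theorem map_prod_eq_bind {α β γ : Type*} [MeasurableSpace α] [MeasurableSpace β]
    [MeasurableSpace γ] (ρ : Measure α) (τ : Measure β) [SFinite τ] {f : α × β → γ}
    (hf : Measurable f) :
    (ρ.prod τ).map f = ρ.bind fun a => τ.map fun b => f (a, b) := by
  have fiber (a : α) : τ.map (fun b => f (a, b)) = (τ.map (Prod.mk a)).map f :=
    (Measure.map_map hf measurable_prodMk_left).symm
  simp_rw [fiber, Measure.prod, Measure.bind]
  rw [← Measure.join_map_map hf, Measure.map_map (Measure.measurable_map f hf)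
    Measurable.map_prodMk_left]
  rfl

theorem norm_cexp_mul_I_sub_one_sub_le (x : ℝ) :
    ‖Complex.exp (x * Complex.I) - 1 - x * Complex.I‖ ≤ x ^ 2 / 2 := by
  wlog hx : 0 ≤ x generalizing x
  · have := this (-x) (by linarith)
    rw [← Complex.norm_conj] at this
    simpa [← Complex.exp_conj, sub_eq_add_neg] using this
  have deriv_remainder (t : ℝ) :
      HasDerivAt (fun t : ℝ => Complex.exp (t * Complex.I) - 1 - t * Complex.I)
        (Complex.exp (t * Complex.I) * Complex.I - Complex.I) t := by
    have linear : HasDerivAt (fun t : ℝ => (t : ℂ) * Complex.I) Complex.I t := by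
      simpa using (hasDerivAt_id t).ofReal_comp.mul_const Complex.I
    exact (linear.cexp.sub_const 1).sub linear
  refine image_norm_le_of_norm_deriv_right_le_deriv_boundary (a := 0) (b := x)
    (B := fun t => t ^ 2 / 2) (B' := fun t => t)
    (fun t _ => (deriv_remainder t).continuousAt.continuousWithinAt)
    (fun t _ => (deriv_remainder t).hasDerivWithinAt) (by simp)
    (fun t => by simpa using (hasDerivAt_pow 2 t).div_const 2) (fun t ht => ?_) ⟨hx, le_rfl⟩
  calc ‖Complex.exp (t * Complex.I) * Complex.I - Complex.I‖
      = ‖Complex.exp (Complex.I * t) - 1‖ := by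
        rw [← sub_one_mul, norm_mul, Complex.norm_I, mul_one, mul_comm]
    _ ≤ t := by simpa [abs_of_nonneg ht.1] using Real.norm_exp_I_mul_ofReal_sub_one_le (x := t)

theorem norm_charFun_sub_one_le {β : Measure ℝ} [IsProbabilityMeasure β] (hβ : MemLp id 2 β)
    (mean_zero : ∫ v, v ∂β = 0) (t : ℝ) :
    ‖charFun β t - 1‖ ≤ t ^ 2 / 2 * ∫ v, v ^ 2 ∂β := by
  have integrable_exp : Integrable (fun v : ℝ => Complex.exp ((t * v : ℝ) * Complex.I)) β :=
    .of_bound (by fun_prop) 1 (ae_of_all _ fun v => (Complex.norm_exp_ofReal_mul_I _).le)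
  have integrable_linear : Integrable (fun v : ℝ => ((t * v : ℝ) : ℂ) * Complex.I) β :=
    ((hβ.integrable one_le_two).const_mul t).ofReal.mul_const _
  have remainder : charFun β t - 1 =
      ∫ v : ℝ, (Complex.exp ((t * v : ℝ) * Complex.I) - 1 - (t * v : ℝ) * Complex.I) ∂β := by
    rw [integral_sub (f := fun v : ℝ => Complex.exp ((t * v : ℝ) * Complex.I) - 1)
        (integrable_exp.sub (integrable_const 1)) integrable_linear,
      integral_sub integrable_exp (integrable_const 1), integral_mul_const,
      integral_complex_ofReal, integral_const_mul, mean_zero, charFun_apply_real]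
    simp
  rw [remainder, ← integral_const_mul]
  refine norm_integral_le_of_norm_le (hβ.integrable_sq.const_mul _) (ae_of_all _ fun v => ?_)
  exact (norm_cexp_mul_I_sub_one_sub_le _).trans_eq (by ring)

theorem charFun_map_sub_div (P : Measure ℝ) (c s t : ℝ) :
    charFun (P.map fun x => (x - c) / s) t =
      charFun P (s⁻¹ * t) * Complex.exp ((-c * (s⁻¹ * t) : ℝ) * Complex.I) := by
  simp_rw [div_eq_inv_mul, sub_eq_add_neg]
  rw [charFun_map_mul_comp (by fun_prop), charFun_map_add_const]
  simp [mul_comm]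

theorem tendsto_charFun_centered_pow {ρ : Measure ℝ} [IsProbabilityMeasure ρ]
    (hρ : MemLp id 2 ρ) (t : ℝ) :
    Tendsto (fun n : ℕ => charFun (ρ.map (· - ∫ x, x ∂ρ)) ((Real.sqrt n)⁻¹ * t) ^ n) atTop
      (nhds (charFun (gaussianReal 0 Var[id; ρ].toNNReal) t)) := by
  obtain ⟨Ω, _, P, X, X_meas, X_law, X_indep, _⟩ := exists_iid ℕ ρ
  have X_ident (i : ℕ) : IdentDistrib (X i) (X 0) P P := (X_law i).identDistrib (X_law 0)
  have X_ident_id : IdentDistrib (X 0) id P ρ := (X_law 0).identDistrib HasLaw.id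
  set m := ∫ x, x ∂ρ
  have centered_sum (n : ℕ) (ω : Ω) : ∑ k ∈ Finset.range n, X k ω - n * m =
      ∑ k ∈ Finset.range n, (X k ω - m) := by
    simp [Finset.sum_sub_distrib]
  have clt := tendstoInDistribution_inv_sqrt_mul_sum_sub (Y := id)
    (by rw [X_ident_id.variance_eq]; exact HasLaw.id) (X_ident_id.memLp_iff.2 hρ) X_indep X_ident
  have clt_charFun := ProbabilityMeasure.tendsto_iff_tendsto_charFun.1 clt.tendsto t
  have mean_eq : P[X 0] = m := X_ident_id.integral_eq
  have law_centered : P.map (fun ω => X 0 ω - m) = ρ.map (· - m) := by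
    rw [← (X_law 0).map_eq, Measure.map_map (by fun_prop) (X_meas 0)]
    rfl
  have charFun_sum (n : ℕ) :
      charFun (P.map fun ω => (Real.sqrt n)⁻¹ * ∑ k ∈ Finset.range n, (X k ω - m)) t =
        charFun (P.map fun ω => X 0 ω - m) ((Real.sqrt n)⁻¹ * t) ^ n :=
    charFun_inv_sqrt_mul_sum (X_indep.comp (fun _ x => x - m) (by fun_prop))
      (fun i => (X_ident i).comp (u := fun x => x - m) (by fun_prop))
  simpa only [mean_eq, centered_sum, ProbabilityMeasure.coe_mk, Measure.map_id, charFun_sum,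
    law_centered] using clt_charFun

theorem norm_charFun_map_sub_div_sub_pow (P ρ : Measure ℝ) (n : ℕ) (m s t : ℝ) :
    ‖charFun (P.map fun x => (x - n * m) / s) t - charFun (ρ.map (· - m)) (s⁻¹ * t) ^ n‖ =
      ‖charFun P (s⁻¹ * t) - charFun ρ (s⁻¹ * t) ^ n‖ := by
  have centered (u : ℝ) :
      charFun (ρ.map (· - m)) u = charFun ρ u * Complex.exp ((-m * u : ℝ) * Complex.I) := by
    simpa using charFun_map_sub_div ρ m 1 u
  have phase (u : ℝ) : Complex.exp ((-(n * m) * u : ℝ) * Complex.I) =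
      Complex.exp ((-m * u : ℝ) * Complex.I) ^ n := by
    rw [← Complex.exp_nat_mul]
    push_cast
    ring_nf
  rw [charFun_map_sub_div, phase, centered, mul_pow, ← sub_mul, norm_mul, norm_pow,
    Complex.norm_exp_ofReal_mul_I, one_pow, mul_one]

theorem tendsto_integral_gaussian_of_charFun_sub_pow {ρ : Measure ℝ} [IsProbabilityMeasure ρ]
    (hρ : MemLp id 2 ρ) (P : ℕ → Measure ℝ) [∀ n, IsProbabilityMeasure (P n)]
    (hP : ∀ t : ℝ, Tendsto (fun n : ℕ => charFun (P n) ((Real.sqrt n)⁻¹ * t) -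
      charFun ρ ((Real.sqrt n)⁻¹ * t) ^ n) atTop (nhds 0)) (f : BoundedContinuousFunction ℝ ℝ) :
    Tendsto (fun n : ℕ => ∫ x, f ((x - n * ∫ x, x ∂ρ) / Real.sqrt n) ∂(P n)) atTop
      (nhds (∫ x, f x ∂(gaussianReal 0 Var[id; ρ].toNNReal))) := by
  set m := ∫ x, x ∂ρ
  let rescale (n : ℕ) (x : ℝ) : ℝ := (x - n * m) / Real.sqrt n
  have rescale_meas (n : ℕ) : Measurable (rescale n) := by fun_prop
  let Q (n : ℕ) : ProbabilityMeasure ℝ :=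
    ⟨(P n).map (rescale n), Measure.isProbabilityMeasure_map (rescale_meas n).aemeasurable⟩
  let N : ProbabilityMeasure ℝ := ⟨gaussianReal 0 Var[id; ρ].toNNReal, inferInstance⟩
  have Q_tendsto : Tendsto Q atTop (nhds N) := by
    refine ProbabilityMeasure.tendsto_iff_tendsto_charFun.2 fun t => ?_
    have diff_tendsto : Tendsto (fun n : ℕ => charFun (Q n : Measure ℝ) t -
        charFun (ρ.map (· - m)) ((Real.sqrt n)⁻¹ * t) ^ n) atTop (nhds 0) := by
      rw [tendsto_zero_iff_norm_tendsto_zero]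
      simpa only [Q, rescale, ProbabilityMeasure.coe_mk, norm_charFun_map_sub_div_sub_pow,
        norm_zero] using (hP t).norm
    simpa [N, m] using diff_tendsto.add (tendsto_charFun_centered_pow hρ t)
  refine (ProbabilityMeasure.tendsto_iff_forall_integral_tendsto.1 Q_tendsto f).congr fun n => ?_
  exact integral_map (rescale_meas n).aemeasurable f.continuous.aestronglyMeasurable

section CosineConv

variable {β ν₁ ν₂ : Measure ℝ}

/-- The law of the side `√(R² + S² + 2RSV)` of a triangle for independent `R ∼ ν₁`, `S ∼ ν₂` and
`V ∼ β`: adding two isotropic vectors of lengths `R` and `S` whose angle has cosine `V`. -/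
noncomputable def cosineConv (β ν₁ ν₂ : Measure ℝ) : Measure ℝ :=
  ((ν₁.prod ν₂).prod β).map fun p =>
    Real.sqrt (p.1.1 ^ 2 + p.1.2 ^ 2 + 2 * p.1.1 * p.1.2 * p.2)

theorem cosineConv_eq_bind [SFinite ν₁] [SFinite ν₂] [SFinite β] :
    cosineConv β ν₁ ν₂ = ν₁.bind fun r => ν₂.bind fun s =>
      β.map fun v => Real.sqrt (r ^ 2 + s ^ 2 + 2 * r * s * v) := by
  have reassociate : cosineConv β ν₁ ν₂ = (ν₁.prod (ν₂.prod β)).map fun p =>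
      Real.sqrt (p.1 ^ 2 + p.2.1 ^ 2 + 2 * p.1 * p.2.1 * p.2.2) := by
    rw [← Measure.prodAssoc_prod, Measure.map_map (by fun_prop) (by fun_prop)]
    rfl
  rw [reassociate, map_prod_eq_bind _ _ (by fun_prop)]
  congr with r : 1
  exact map_prod_eq_bind _ _ (by fun_prop)

instance isProbabilityMeasure_cosineConv [IsProbabilityMeasure ν₁] [IsProbabilityMeasure ν₂]
    [IsProbabilityMeasure β] :
    IsProbabilityMeasure (cosineConv β ν₁ ν₂) :=
  Measure.isProbabilityMeasure_map (by fun_prop)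

theorem map_sq_cosineConv [SFinite β] (hβ : ∀ᵐ v ∂β, |v| ≤ 1) :
    (cosineConv β ν₁ ν₂).map (· ^ 2) =
      ((ν₁.prod ν₂).prod β).map fun p => p.1.1 ^ 2 + p.1.2 ^ 2 + 2 * p.1.1 * p.1.2 * p.2 := by
  rw [cosineConv, Measure.map_map (by fun_prop) (by fun_prop)]
  refine Measure.map_congr ?_
  filter_upwards [Measure.quasiMeasurePreserving_snd.ae hβ] with p hp
  obtain ⟨neg_one_le, le_one⟩ := abs_le.1 hp
  refine Real.sq_sqrt ?_
  nlinarith [mul_nonneg (sub_nonneg.2 le_one) (sq_nonneg (p.1.1 - p.1.2)),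
    mul_nonneg (neg_le_iff_add_nonneg.1 neg_one_le) (sq_nonneg (p.1.1 + p.1.2))]

theorem memLp_two_of_abs_le_one [IsFiniteMeasure β] (hβ : ∀ᵐ v ∂β, |v| ≤ 1) : MemLp id 2 β :=
  .of_bound (by fun_prop) 1 hβ

section Moments

variable [IsProbabilityMeasure β] [IsProbabilityMeasure ν₁] [IsProbabilityMeasure ν₂]

theorem integrable_mul_mul_prod (h₁ : MemLp id 2 ν₁) (h₂ : MemLp id 2 ν₂) (hβ : MemLp id 2 β) :
    Integrable (fun p : (ℝ × ℝ) × ℝ => 2 * p.1.1 * p.1.2 * p.2) ((ν₁.prod ν₂).prod β) :=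
  (((h₁.integrable one_le_two).const_mul 2).mul_prod (h₂.integrable one_le_two)).mul_prod
    (hβ.integrable one_le_two)

theorem integrable_sq_add_sq_prod (h₁ : MemLp id 2 ν₁) (h₂ : MemLp id 2 ν₂) :
    Integrable (fun p : (ℝ × ℝ) × ℝ => p.1.1 ^ 2 + p.1.2 ^ 2) ((ν₁.prod ν₂).prod β) :=
  ((h₁.integrable_sq.comp_fst ν₂).add (h₂.integrable_sq.comp_snd ν₁)).comp_fst β

theorem memLp_two_cosineConv (hβ : ∀ᵐ v ∂β, |v| ≤ 1) (h₁ : MemLp id 2 ν₁) (h₂ : MemLp id 2 ν₂) :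
    MemLp id 2 (cosineConv β ν₁ ν₂) := by
  refine (memLp_two_iff_integrable_sq (by fun_prop)).2 ?_
  have : Integrable id ((cosineConv β ν₁ ν₂).map (· ^ 2)) := by
    rw [map_sq_cosineConv hβ, integrable_map_measure (by fun_prop) (by fun_prop)]
    exact (integrable_sq_add_sq_prod h₁ h₂).add
      (integrable_mul_mul_prod h₁ h₂ (memLp_two_of_abs_le_one hβ))
  rwa [integrable_map_measure (by fun_prop) (by fun_prop)] at this

theorem integral_sq_cosineConv (hβ : ∀ᵐ v ∂β, |v| ≤ 1) (mean_zero : ∫ v, v ∂β = 0)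
    (h₁ : MemLp id 2 ν₁) (h₂ : MemLp id 2 ν₂) :
    ∫ x, x ^ 2 ∂(cosineConv β ν₁ ν₂) = ∫ x, x ^ 2 ∂ν₁ + ∫ x, x ^ 2 ∂ν₂ := by
  have sq₁ : Integrable (fun x => x ^ 2) ν₁ := h₁.integrable_sq
  have sq₂ : Integrable (fun x => x ^ 2) ν₂ := h₂.integrable_sq
  calc ∫ x, x ^ 2 ∂(cosineConv β ν₁ ν₂)
      = ∫ x, x ∂((cosineConv β ν₁ ν₂).map (· ^ 2)) := by
        rw [integral_map (by fun_prop) (by fun_prop)]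
    _ = ∫ p, (p.1.1 ^ 2 + p.1.2 ^ 2 + 2 * p.1.1 * p.1.2 * p.2) ∂((ν₁.prod ν₂).prod β) := by
        rw [map_sq_cosineConv hβ]
        exact integral_map (by fun_prop) (by fun_prop)
    _ = ∫ p, (p.1.1 ^ 2 + p.1.2 ^ 2) ∂((ν₁.prod ν₂).prod β) := by
        rw [integral_add (integrable_sq_add_sq_prod h₁ h₂)
            (integrable_mul_mul_prod h₁ h₂ (memLp_two_of_abs_le_one hβ)),
          integral_prod_mul (fun q : ℝ × ℝ => 2 * q.1 * q.2) fun v => v, mean_zero, mul_zero,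
          add_zero]
    _ = ∫ x, x ^ 2 ∂ν₁ + ∫ x, x ^ 2 ∂ν₂ := by
        rw [integral_fun_fst fun q : ℝ × ℝ => q.1 ^ 2 + q.2 ^ 2,
          integral_add (sq₁.comp_fst ν₂) (sq₂.comp_snd ν₁),
          integral_fun_fst fun x : ℝ => x ^ 2, integral_fun_snd fun x : ℝ => x ^ 2]
        simp

theorem charFun_map_sq_cosineConv (hβ : ∀ᵐ v ∂β, |v| ≤ 1) (θ : ℝ) :
    charFun ((cosineConv β ν₁ ν₂).map (· ^ 2)) θ =
      ∫ p, Complex.exp ((θ * (p.1 ^ 2 + p.2 ^ 2) : ℝ) * Complex.I) *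
        charFun β (2 * θ * p.1 * p.2) ∂(ν₁.prod ν₂) := by
  rw [map_sq_cosineConv hβ, charFun_apply_real, integral_map (by fun_prop) (by fun_prop),
    integral_prod _ (.of_bound (by fun_prop) 1 (ae_of_all _ fun p => ?_))]
  · refine integral_congr_ae (ae_of_all _ fun p => ?_)
    simp only [charFun_apply_real, ← integral_const_mul, ← Complex.exp_add]
    refine integral_congr_ae (ae_of_all _ fun v => ?_)
    dsimp only
    push_cast
    ring_nf
  · rw [← Complex.ofReal_mul, Complex.norm_exp_ofReal_mul_I]

theorem charFun_map_sq_mul_charFun_map_sq (θ : ℝ) :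
    charFun (ν₁.map (· ^ 2)) θ * charFun (ν₂.map (· ^ 2)) θ =
      ∫ p, Complex.exp ((θ * (p.1 ^ 2 + p.2 ^ 2) : ℝ) * Complex.I) ∂(ν₁.prod ν₂) := by
  simp_rw [charFun_apply_real]
  rw [integral_map (by fun_prop) (by fun_prop), integral_map (by fun_prop) (by fun_prop),
    ← integral_prod_mul]
  refine integral_congr_ae (ae_of_all _ fun p => ?_)
  dsimp only
  rw [← Complex.exp_add]
  push_cast
  ring_nf

theorem norm_charFun_map_sq_cosineConv_sub_mul_le (hβ : ∀ᵐ v ∂β, |v| ≤ 1)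
    (mean_zero : ∫ v, v ∂β = 0) (h₁ : MemLp id 2 ν₁) (h₂ : MemLp id 2 ν₂) (θ : ℝ) :
    ‖charFun ((cosineConv β ν₁ ν₂).map (· ^ 2)) θ -
        charFun (ν₁.map (· ^ 2)) θ * charFun (ν₂.map (· ^ 2)) θ‖ ≤
      2 * θ ^ 2 * (∫ v, v ^ 2 ∂β) * ((∫ x, x ^ 2 ∂ν₁) * ∫ x, x ^ 2 ∂ν₂) := by
  let phase (p : ℝ × ℝ) : ℂ := Complex.exp ((θ * (p.1 ^ 2 + p.2 ^ 2) : ℝ) * Complex.I)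
  have norm_phase (p : ℝ × ℝ) : ‖phase p‖ = 1 := Complex.norm_exp_ofReal_mul_I _
  have integrable_phase : Integrable phase (ν₁.prod ν₂) :=
    .of_bound (by fun_prop) 1 (ae_of_all _ fun p => (norm_phase p).le)
  have integrable_phase_mul :
      Integrable (fun p => phase p * charFun β (2 * θ * p.1 * p.2)) (ν₁.prod ν₂) :=
    integrable_phase.mul_bdd (c := 1) (by fun_prop) (ae_of_all _ fun _ => norm_charFun_le_one _)
  rw [charFun_map_sq_cosineConv hβ, charFun_map_sq_mul_charFun_map_sq,
    ← integral_sub integrable_phase_mul integrable_phase, ← integral_prod_mul, ← integral_const_mul]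
  refine norm_integral_le_of_norm_le
    ((h₁.integrable_sq.mul_prod h₂.integrable_sq).const_mul _) (ae_of_all _ fun p => ?_)
  calc ‖phase p * charFun β (2 * θ * p.1 * p.2) - phase p‖
      = ‖charFun β (2 * θ * p.1 * p.2) - 1‖ := by
        rw [← mul_sub_one, norm_mul, norm_phase, one_mul]
    _ ≤ (2 * θ * p.1 * p.2) ^ 2 / 2 * ∫ v, v ^ 2 ∂β :=
        norm_charFun_sub_one_le (memLp_two_of_abs_le_one hβ) mean_zero _
    _ = 2 * θ ^ 2 * (∫ v, v ^ 2 ∂β) * (p.1 ^ 2 * p.2 ^ 2) := by ring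

end Moments
end CosineConv

section KingmanAngle

variable {μ : ℝ}

/-- The normalised Gegenbauer law `κ_μ⁻¹ (1 - v²)^{μ - 3/2} dv` on `[-1, 1]`: the cosine of the
angle between the position and the next step of the Kingman walk of index `μ`. For integer `2μ = d`
it is the law of one coordinate of a uniform point on the unit sphere of `ℝ^d`. -/
noncomputable def kingmanAngle (μ : ℝ) : Measure ℝ :=
  (ENNReal.ofReal (kappa μ))⁻¹ •
    (volume.restrict (Set.Icc (-1 : ℝ) 1)).withDensity
      fun v => ENNReal.ofReal ((1 - v ^ 2) ^ (μ - 3 / 2))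

theorem kingmanKernel_eq_map (μ r s : ℝ) :
    kingmanKernel μ r s =
      (kingmanAngle μ).map fun v => Real.sqrt (r ^ 2 + s ^ 2 + 2 * r * s * v) := by
  rw [kingmanKernel, kingmanAngle, Measure.map_smul]

theorem intervalIntegrable_one_sub_sq_rpow {p : ℝ} (hp : -1 < p) :
    IntervalIntegrable (fun v : ℝ => (1 - v ^ 2) ^ p) volume (-1) 1 := by
  have right_half : IntervalIntegrable (fun v : ℝ => (1 - v ^ 2) ^ p) volume 0 1 := by
    have singular : IntervalIntegrable (fun v : ℝ => (1 - v) ^ p) volume 0 1 := by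
      simpa using ((intervalIntegral.intervalIntegrable_rpow' hp (a := 0) (b := 1)).comp_sub_left
        1).symm
    have regular : ContinuousOn (fun v : ℝ => (1 + v) ^ p) (Set.uIcc 0 1) := by
      refine ContinuousOn.rpow_const (by fun_prop) fun v hv => Or.inl ?_
      rw [Set.uIcc_of_le zero_le_one] at hv
      linarith [hv.1]
    refine (singular.mul_continuousOn regular).congr fun v hv => ?_
    rw [Set.uIoc_of_le zero_le_one] at hv
    rw [← Real.mul_rpow (by linarith [hv.2]) (by linarith [hv.1])]
    ring_nf
  have left_half : IntervalIntegrable (fun v : ℝ => (1 - v ^ 2) ^ p) volume (-1) 0 := by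
    simpa using ((IntervalIntegrable.iff_comp_neg (by simp)).1 right_half).symm
  exact left_half.trans right_half

theorem setIntegral_Icc_eq_intervalIntegral (f : ℝ → ℝ) :
    ∫ v in Set.Icc (-1 : ℝ) 1, f v = ∫ v in (-1 : ℝ)..1, f v := by
  rw [integral_Icc_eq_integral_Ioc, intervalIntegral.integral_of_le (by norm_num)]

theorem kappa_pos (hμ : 1 / 2 < μ) : 0 < kappa μ := by
  rw [kappa, setIntegral_Icc_eq_intervalIntegral]
  refine intervalIntegral.intervalIntegral_pos_of_pos_on
    (intervalIntegrable_one_sub_sq_rpow (by linarith)) (fun v hv => ?_) (by norm_num)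
  exact Real.rpow_pos_of_pos (by nlinarith [hv.1, hv.2]) _

theorem one_sub_sq_rpow_nonneg_ae (p : ℝ) :
    0 ≤ᵐ[volume.restrict (Set.Icc (-1 : ℝ) 1)] fun v : ℝ => (1 - v ^ 2) ^ p := by
  filter_upwards [ae_restrict_mem measurableSet_Icc] with v hv
  exact Real.rpow_nonneg (by nlinarith [hv.1, hv.2]) _

theorem isProbabilityMeasure_kingmanAngle (hμ : 1 / 2 < μ) :
    IsProbabilityMeasure (kingmanAngle μ) := by
  have integrable_density : Integrable (fun v : ℝ => (1 - v ^ 2) ^ (μ - 3 / 2))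
      (volume.restrict (Set.Icc (-1) 1)) :=
    (intervalIntegrable_iff_integrableOn_Icc_of_le (by norm_num)).1
      (intervalIntegrable_one_sub_sq_rpow (by linarith))
  constructor
  rw [kingmanAngle, Measure.smul_apply, withDensity_apply _ MeasurableSet.univ,
    Measure.restrict_univ,
    ← ofReal_integral_eq_lintegral_ofReal integrable_density (one_sub_sq_rpow_nonneg_ae _)]
  exact ENNReal.inv_mul_cancel (by simpa using kappa_pos hμ) ENNReal.ofReal_ne_top

theorem abs_le_one_ae_kingmanAngle (μ : ℝ) : ∀ᵐ v ∂(kingmanAngle μ), |v| ≤ 1 := by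
  refine Measure.ae_smul_measure ((withDensity_absolutelyContinuous _ _).ae_le ?_) _
  filter_upwards [ae_restrict_mem measurableSet_Icc] with v hv using abs_le.2 hv

theorem integral_kingmanAngle (hμ : 1 / 2 < μ) (f : ℝ → ℝ) :
    ∫ v, f v ∂(kingmanAngle μ) =
      (kappa μ)⁻¹ * ∫ v in (-1 : ℝ)..1, (1 - v ^ 2) ^ (μ - 3 / 2) * f v := by
  rw [kingmanAngle, integral_smul_measure,
    integral_withDensity_eq_integral_toReal_smul₀ (by fun_prop) (by simp),
    ← setIntegral_Icc_eq_intervalIntegral, ENNReal.toReal_inv,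
    ENNReal.toReal_ofReal (kappa_pos hμ).le, smul_eq_mul]
  congr 1
  refine integral_congr_ae ?_
  filter_upwards [one_sub_sq_rpow_nonneg_ae (μ - 3 / 2)] with v hv
  rw [ENNReal.toReal_ofReal hv, smul_eq_mul]

theorem integral_id_kingmanAngle (hμ : 1 / 2 < μ) : ∫ v, v ∂(kingmanAngle μ) = 0 := by
  have odd_integral := intervalIntegral.integral_comp_neg (a := -1) (b := 1)
    fun v : ℝ => (1 - v ^ 2) ^ (μ - 3 / 2) * v
  simp only [neg_neg, neg_sq, mul_neg, intervalIntegral.integral_neg] at odd_integral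
  rw [integral_kingmanAngle hμ, self_eq_neg.1 odd_integral.symm, mul_zero]

theorem hasDerivAt_mul_one_sub_sq_rpow (p : ℝ) {v : ℝ} (hv : 0 < 1 - v ^ 2) :
    HasDerivAt (fun v : ℝ => v * (1 - v ^ 2) ^ (p + 1))
      ((1 - v ^ 2) ^ p - (2 * p + 3) * ((1 - v ^ 2) ^ p * v ^ 2)) v := by
  have inner : HasDerivAt (fun v : ℝ => 1 - v ^ 2) (-(2 * v)) v := by
    simpa using (hasDerivAt_pow 2 v).const_sub 1
  refine ((hasDerivAt_id v).mul (inner.rpow_const (p := p + 1) (Or.inl hv.ne'))).congr_deriv ?_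
  rw [add_sub_cancel_right, Real.rpow_add_one hv.ne']
  simp only [id]
  ring

theorem integral_one_sub_sq_rpow_mul_sq {p : ℝ} (hp : -1 < p) :
    (2 * p + 3) * ∫ v in (-1 : ℝ)..1, (1 - v ^ 2) ^ p * v ^ 2 =
      ∫ v in (-1 : ℝ)..1, (1 - v ^ 2) ^ p := by
  have integrable_weight := intervalIntegrable_one_sub_sq_rpow hp
  have integrable_weight_mul_sq : IntervalIntegrable
      (fun v : ℝ => (2 * p + 3) * ((1 - v ^ 2) ^ p * v ^ 2)) volume (-1) 1 :=
    (integrable_weight.mul_continuousOn (by fun_prop)).const_mul _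
  have continuous_primitive : Continuous fun v : ℝ => v * (1 - v ^ 2) ^ (p + 1) :=
    continuous_id.mul ((by fun_prop : Continuous fun v : ℝ => 1 - v ^ 2).rpow_const
      fun _ => Or.inr (by linarith))
  have ftc := intervalIntegral.integral_eq_sub_of_hasDerivAt_of_le (by norm_num : (-1 : ℝ) ≤ 1)
    continuous_primitive.continuousOn
    (fun v hv => hasDerivAt_mul_one_sub_sq_rpow p (by nlinarith [hv.1, hv.2]))
    (integrable_weight.sub integrable_weight_mul_sq)
  rw [intervalIntegral.integral_sub integrable_weight integrable_weight_mul_sq,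
    intervalIntegral.integral_const_mul] at ftc
  have boundary : (0 : ℝ) ^ (p + 1) = 0 := Real.zero_rpow (by linarith)
  norm_num [boundary] at ftc
  linarith

theorem integral_sq_kingmanAngle (hμ : 1 / 2 < μ) :
    ∫ v, v ^ 2 ∂(kingmanAngle μ) = (2 * μ)⁻¹ := by
  have by_parts := integral_one_sub_sq_rpow_mul_sq (p := μ - 3 / 2) (by linarith)
  rw [← setIntegral_Icc_eq_intervalIntegral fun v => (1 - v ^ 2) ^ (μ - 3 / 2), ← kappa,
    show 2 * (μ - 3 / 2) + 3 = 2 * μ by ring] at by_parts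
  rw [integral_kingmanAngle hμ]
  refine eq_inv_of_mul_eq_one_right ?_
  rw [mul_left_comm, by_parts, inv_mul_cancel₀ (kappa_pos hμ).ne']

end KingmanAngle

section KingmanPow

variable {μ : ℝ}

theorem kingmanConv_eq_cosineConv (hμ : 1 / 2 < μ) (ν₁ ν₂ : Measure ℝ) [SFinite ν₁]
    [SFinite ν₂] : kingmanConv μ ν₁ ν₂ = cosineConv (kingmanAngle μ) ν₁ ν₂ := by
  have := isProbabilityMeasure_kingmanAngle hμ
  simp_rw [kingmanConv, kingmanKernel_eq_map, cosineConv_eq_bind]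

variable {ν : Measure ℝ} [IsProbabilityMeasure ν]

theorem isProbabilityMeasure_kingmanPow (hμ : 1 / 2 < μ) (n : ℕ) :
    IsProbabilityMeasure (kingmanPow μ ν n) := by
  have := isProbabilityMeasure_kingmanAngle hμ
  induction n with
  | zero => exact Measure.dirac.isProbabilityMeasure
  | succ n ih =>
    rw [kingmanPow, kingmanConv_eq_cosineConv hμ]
    infer_instance

theorem memLp_two_kingmanPow (hμ : 1 / 2 < μ) (hν : MemLp id 2 ν) (n : ℕ) :
    MemLp id 2 (kingmanPow μ ν n) := by
  have := isProbabilityMeasure_kingmanAngle hμ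
  have := isProbabilityMeasure_kingmanPow (ν := ν) hμ
  induction n with
  | zero => exact (memLp_two_iff_integrable_sq (by fun_prop)).2 (integrable_dirac (by simp))
  | succ n ih =>
    rw [kingmanPow, kingmanConv_eq_cosineConv hμ]
    exact memLp_two_cosineConv (abs_le_one_ae_kingmanAngle μ) hν ih

theorem integral_sq_kingmanPow (hμ : 1 / 2 < μ) (hν : MemLp id 2 ν) (n : ℕ) :
    ∫ x, x ^ 2 ∂(kingmanPow μ ν n) = n * ∫ x, x ^ 2 ∂ν := by
  have := isProbabilityMeasure_kingmanAngle hμ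
  have := isProbabilityMeasure_kingmanPow (ν := ν) hμ
  induction n with
  | zero => simp [kingmanPow]
  | succ n ih =>
    rw [kingmanPow, kingmanConv_eq_cosineConv hμ, integral_sq_cosineConv
      (abs_le_one_ae_kingmanAngle μ) (integral_id_kingmanAngle hμ) hν
      (memLp_two_kingmanPow hμ hν n), ih]
    push_cast
    ring

theorem norm_charFun_map_sq_kingmanPow_succ_sub_le (hμ : 1 / 2 < μ) (hν : MemLp id 2 ν) (θ : ℝ)
    (n : ℕ) :
    ‖charFun ((kingmanPow μ ν (n + 1)).map (· ^ 2)) θ -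
        charFun (ν.map (· ^ 2)) θ * charFun ((kingmanPow μ ν n).map (· ^ 2)) θ‖ ≤
      θ ^ 2 * (∫ x, x ^ 2 ∂ν) ^ 2 / μ * n := by
  have := isProbabilityMeasure_kingmanAngle hμ
  have := isProbabilityMeasure_kingmanPow (ν := ν) hμ
  rw [kingmanPow, kingmanConv_eq_cosineConv hμ]
  refine (norm_charFun_map_sq_cosineConv_sub_mul_le (abs_le_one_ae_kingmanAngle μ)
    (integral_id_kingmanAngle hμ) hν (memLp_two_kingmanPow hμ hν n) θ).trans_eq ?_
  rw [integral_sq_kingmanAngle hμ, integral_sq_kingmanPow hμ hν]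
  ring

theorem norm_charFun_map_sq_kingmanPow_sub_pow_le (hμ : 1 / 2 < μ) (hν : MemLp id 2 ν) (θ : ℝ)
    (n : ℕ) :
    ‖charFun ((kingmanPow μ ν n).map (· ^ 2)) θ - charFun (ν.map (· ^ 2)) θ ^ n‖ ≤
      θ ^ 2 * (∫ x, x ^ 2 ∂ν) ^ 2 / μ * n ^ 2 := by
  have : IsProbabilityMeasure (ν.map (· ^ 2)) := Measure.isProbabilityMeasure_map (by fun_prop)
  set φ := charFun (ν.map (· ^ 2)) θ
  set C := θ ^ 2 * (∫ x, x ^ 2 ∂ν) ^ 2 / μ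
  have C_nonneg : 0 ≤ C := div_nonneg (by positivity) (by linarith)
  induction n with
  | zero => simp [kingmanPow]
  | succ n ih =>
    set ψ := charFun ((kingmanPow μ ν n).map (· ^ 2)) θ
    calc ‖charFun ((kingmanPow μ ν (n + 1)).map (· ^ 2)) θ - φ ^ (n + 1)‖
        ≤ ‖charFun ((kingmanPow μ ν (n + 1)).map (· ^ 2)) θ - φ * ψ‖ +
            ‖φ * ψ - φ ^ (n + 1)‖ := norm_sub_le_norm_sub_add_norm_sub _ _ _
      _ ≤ C * n + ‖φ‖ * ‖ψ - φ ^ n‖ := by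
          rw [pow_succ', ← mul_sub, norm_mul]
          gcongr
          exact norm_charFun_map_sq_kingmanPow_succ_sub_le hμ hν θ n
      _ ≤ C * n + 1 * (C * n ^ 2) := by gcongr; exact norm_charFun_le_one _
      _ ≤ C * (n + 1 : ℕ) ^ 2 := by
          push_cast
          nlinarith [mul_nonneg C_nonneg n.cast_nonneg]

end KingmanPow

theorem tendsto_charFun_map_sq_kingmanPow_sub_pow {ν : Measure ℝ} [IsProbabilityMeasure ν]
    (hν : MemLp id 2 ν) {μs : ℕ → ℝ} (hμs : ∀ n, μs n > 1 / 2)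
    (hlim : Tendsto (fun n : ℕ => n / μs n) atTop (nhds 0)) (t : ℝ) :
    Tendsto (fun n : ℕ =>
      charFun ((kingmanPow (μs n) ν n).map (· ^ 2)) ((Real.sqrt n)⁻¹ * t) -
        charFun (ν.map (· ^ 2)) ((Real.sqrt n)⁻¹ * t) ^ n) atTop (nhds 0) := by
  refine squeeze_zero_norm (fun n => ?_)
    (by simpa using hlim.const_mul (t ^ 2 * (∫ x, x ^ 2 ∂ν) ^ 2))
  refine (norm_charFun_map_sq_kingmanPow_sub_pow_le (hμs n) hν _ n).trans_eq ?_
  rw [mul_pow, inv_pow, Real.sq_sqrt n.cast_nonneg]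
  field_simp

theorem variance_id_map_sq {ν : Measure ℝ} [IsProbabilityMeasure ν]
    (hν : MemLp id 2 (ν.map (· ^ 2))) :
    Var[id; ν.map (· ^ 2)] = ∫ x, x ^ 4 ∂ν - (∫ x, x ^ 2 ∂ν) ^ 2 := by
  have : IsProbabilityMeasure (ν.map (· ^ 2)) := Measure.isProbabilityMeasure_map (by fun_prop)
  rw [variance_eq_sub hν, integral_map (by fun_prop) (by fun_prop),
    integral_map (by fun_prop) (by fun_prop)]
  simp [← pow_mul]

theorem kingman_clt_general (ν : Measure ℝ) [IsProbabilityMeasure ν]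
    (hm4int : Integrable (fun x => x ^ 4) ν)
    (σ2 m4 : ℝ) (hσ : σ2 = ∫ x, x ^ 2 ∂ν) (hm4 : m4 = ∫ x, x ^ 4 ∂ν)
    (μs : ℕ → ℝ) (hμs : ∀ n, μs n > 1 / 2)
    (hlim : Tendsto (fun n : ℕ => n / μs n) atTop (nhds 0)) :
    ∀ f : BoundedContinuousFunction ℝ ℝ,
      Tendsto
        (fun n : ℕ => ∫ t, f ((t ^ 2 - n * σ2) / Real.sqrt n) ∂(kingmanPow (μs n) ν n))
        atTop (nhds (∫ x, f x ∂(gaussianReal 0 (m4 - σ2 ^ 2).toNNReal))) := by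
  intro f
  have : IsProbabilityMeasure (ν.map (· ^ 2)) := Measure.isProbabilityMeasure_map (by fun_prop)
  have (n : ℕ) : IsProbabilityMeasure ((kingmanPow (μs n) ν n).map (· ^ 2)) :=
    have := isProbabilityMeasure_kingmanPow (ν := ν) (hμs n) n
    Measure.isProbabilityMeasure_map (by fun_prop)
  have sq_memLp : MemLp (fun x : ℝ => x ^ 2) 2 ν :=
    (memLp_two_iff_integrable_sq (by fun_prop)).2 (by simpa only [← pow_mul] using hm4int)
  have id_memLp : MemLp id 2 ν :=
    (memLp_two_iff_integrable_sq (by fun_prop)).2 (sq_memLp.integrable one_le_two)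
  have id_memLp_map_sq : MemLp id 2 (ν.map (· ^ 2)) :=
    (memLp_map_measure_iff (by fun_prop) (by fun_prop)).2 sq_memLp
  have clt := tendsto_integral_gaussian_of_charFun_sub_pow id_memLp_map_sq _
    (tendsto_charFun_map_sq_kingmanPow_sub_pow id_memLp hμs hlim) f
  have mean_map_sq : ∫ x, x ∂(ν.map (· ^ 2)) = σ2 := by
    rw [hσ, integral_map (by fun_prop) (by fun_prop)]
  rw [variance_id_map_sq id_memLp_map_sq, ← hm4, ← hσ, mean_map_sq] at clt
  refine clt.congr fun n => ?_
  exact integral_map (by fun_prop) (by fun_prop)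

theorem tendsto_natCast_div_of_tendsto_sq_div {a : ℕ → ℝ} (ha : ∀ n, 0 ≤ a n)
    (h : Tendsto (fun n : ℕ => (n : ℝ) ^ 2 / a n) atTop (nhds 0)) :
    Tendsto (fun n : ℕ => n / a n) atTop (nhds 0) := by
  refine squeeze_zero (fun n => div_nonneg n.cast_nonneg (ha n)) (fun n => ?_) h
  gcongr
  · exact ha n
  · exact_mod_cast Nat.le_self_pow two_ne_zero n

/-- CLT for Kingman random walks with `n²/μₙ → 0`: the law of `((S_n^{μ_n})² - nσ²)/√n`
(where the law of `S_n^{μ_n}` is `ν^{(n,*_{μ_n})}`) converges in distribution to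
`N(0, m₄(ν) - σ⁴)`. -/
theorem kingman_clt (ν : Measure ℝ) [IsProbabilityMeasure ν]
    (hν : ν (Set.Iio 0) = 0) (hm4int : Integrable (fun x => x ^ 4) ν)
    (σ2 m4 : ℝ) (hσ : σ2 = ∫ x, x ^ 2 ∂ν) (hm4 : m4 = ∫ x, x ^ 4 ∂ν)
    (μs : ℕ → ℝ) (hμs : ∀ n, μs n > 1 / 2)
    (hlim : Tendsto (fun n : ℕ => (n : ℝ) ^ 2 / μs n) atTop (nhds 0)) :
    ∀ f : BoundedContinuousFunction ℝ ℝ,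
      Tendsto
        (fun n : ℕ => ∫ t, f ((t ^ 2 - n * σ2) / Real.sqrt n) ∂(kingmanPow (μs n) ν n))
        atTop (nhds (∫ x, f x ∂(gaussianReal 0 (m4 - σ2 ^ 2).toNNReal))) :=
  kingman_clt_general ν hm4int σ2 m4 hσ hm4 μs hμs
    (tendsto_natCast_div_of_tendsto_sq_div (fun n => by linarith [hμs n]) hlim)
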